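/- For every integer r ≥ 2, if G is an (r,2r)-biregular bipartite graph, then 3 ≤ š(G) ≤ 2^{⌈r/2⌉} + 1. -/

import Mathlib

open SimpleGraph Finset

/-- A proper edge coloring of `G` with colors in `ℕ`: distinct edges of `G`
sharing an endpoint receive distinct colors. -/
def IsProperEdgeColoring {V : Type*} (G : SimpleGraph V) (c : Sym2 V → ℕ) : Prop :=
  ∀ e₁ ∈ G.edgeSet, ∀ e₂ ∈ G.edgeSet, e₁ ≠ e₂ → (∃ v, v ∈ e₁ ∧ v ∈ e₂) → c e₁ ≠ c e₂

/-- The palette of a vertex `v`: the set of colors appearing on edges of `G` incident with `v`. -/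
def palette {V : Type*} (G : SimpleGraph V) (c : Sym2 V → ℕ) (v : V) : Set ℕ :=
  {n | ∃ e ∈ G.edgeSet, v ∈ e ∧ c e = n}

/-- The palette index of `G`: the minimum number of distinct palettes occurring in a
proper edge coloring of `G`. -/
noncomputable def paletteIndex {V : Type*} (G : SimpleGraph V) : ℕ :=
  sInf {k | ∃ c : Sym2 V → ℕ, IsProperEdgeColoring G c ∧ (Set.range (palette G c)).ncard = k}

/-- `G` is `(a,b)`-biregular: bipartite with nonempty parts `(X, Y)` such that every
vertex in `X` has degree `a` and every vertex in `Y` has degree `b`. -/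
def IsBiregular {V : Type*} [Fintype V] (G : SimpleGraph V) [DecidableRel G.Adj] (a b : ℕ) : Prop :=
  ∃ X Y : Finset V, X.Nonempty ∧ Y.Nonempty ∧ Disjoint X Y ∧ (∀ v : V, v ∈ X ∨ v ∈ Y) ∧
    (∀ v w, G.Adj v w → (v ∈ X ∧ w ∈ Y) ∨ (v ∈ Y ∧ w ∈ X)) ∧
    (∀ v ∈ X, G.degree v = a) ∧ (∀ v ∈ Y, G.degree v = b)

/-!
Lower bound: the two parts have different degrees, so their palettes differ in size. A color seen at
`y ∈ Y` but not at `x ∈ X` occurs on an edge `yw`, and then `w`, `x` and `y` have distinct palettes.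

Upper bound, for an `(r, mr)`-biregular graph: splitting each vertex of `Y` into `m` vertices of
degree `r` gives an `r`-regular bipartite graph, whose edges decompose into `r` perfect matchings by
Kőnig's theorem. In `G` the `j`-th matching is the graph of an `m`-to-one map `f j : X → Y`. The
pair `f (2l)`, `f (2l + 1)` is itself an `m`-regular bipartite multigraph with edge set `X`, so
Kőnig's theorem again gives `s l : X → Fin m` that is bijective on the fibers of both maps. Color
the edge `x (f j x)` by `(j, s (j / 2) x)`: each `y` sees all colors, and the palette of `x` depends
only on the `⌈r / 2⌉` labels `s l x`.
-/

/-- `f` is `k`-to-one: every fiber has exactly `k` elements. If `f` sends each edge of a bipartite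
multigraph to its endpoint in one of the parts, this says that the part is `k`-regular. The
cardinality is `Set.ncard`, so for `k = 0` infinite fibers are also admitted. -/
def IsKToOne {α β : Type*} (k : ℕ) (f : α → β) : Prop :=
  ∀ b, (f ⁻¹' {b}).ncard = k

/-- `c` labels the fibers of `f` by `ι`: it restricts to a bijection from each fiber onto `ι`. For
an endpoint map `f` of a bipartite multigraph and an edge coloring `c`, this says that every vertex
in that part sees each color exactly once. -/
def IsFiberLabeling {α β ι : Type*} (f : α → β) (c : α → ι) : Prop :=
  Function.Bijective fun a => (f a, c a)

section FiberLabeling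

variable {α β γ ι κ : Type*} {k m r : ℕ}

theorem IsFiberLabeling.bijOn {f : α → β} {c : α → ι} (hc : IsFiberLabeling f c) (b : β) :
    Set.BijOn c (f ⁻¹' {b}) Set.univ := by
  refine ⟨Set.mapsTo_univ _ _, fun a ha a' ha' h => hc.1 (Prod.ext (ha.trans ha'.symm) h),
    fun i _ => ?_⟩
  obtain ⟨a, ha⟩ := hc.2 (b, i)
  exact ⟨a, congrArg Prod.fst ha, congrArg Prod.snd ha⟩

theorem IsFiberLabeling.isKToOne {f : α → β} {c : α → ι} (hc : IsFiberLabeling f c) :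
    IsKToOne (Nat.card ι) f := fun b =>
  (hc.bijOn b).ncard_eq.trans (Set.ncard_univ ι)

theorem IsKToOne.card_filter_mem [Fintype α] [DecidableEq β] {f : α → β} (hf : IsKToOne k f)
    (s : Finset β) : #{a | f a ∈ s} = k * #s := by
  have card_fiber (b : β) : #{a | f a = b} = k := by
    rw [← hf b, ← Set.ncard_coe_finset, coe_filter_univ]
    rfl
  rw [← sum_card_fiberwise_eq_card_filter, sum_congr rfl fun b _ => card_fiber b, sum_const,
    smul_eq_mul, mul_comm]

theorem IsKToOne.card_eq_mul [Finite α] [Finite β] {f : α → β} (hf : IsKToOne k f) :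
    Nat.card α = k * Nat.card β := by
  classical
  have := Fintype.ofFinite α
  have := Fintype.ofFinite β
  simpa using hf.card_filter_mem univ

theorem bijOn_range_univ_of_bijective_comp {f : α → β} {g : ι → α}
    (h : Function.Bijective (f ∘ g)) : Set.BijOn f (Set.range g) Set.univ := by
  refine ⟨Set.mapsTo_univ _ _, h.1.injOn_range, fun b _ => ?_⟩
  obtain ⟨i, rfl⟩ := h.2 b
  exact ⟨g i, ⟨i, rfl⟩, rfl⟩

theorem IsKToOne.restrict_compl {f : α → β} (hf : IsKToOne (k + 1) f) {M : Set α}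
    (hM : Set.BijOn f M Set.univ) : IsKToOne k (fun a : ↥Mᶜ => f a) := by
  intro b
  obtain ⟨m, hmM, hmb⟩ := hM.surjOn (Set.mem_univ b)
  have fiber_eq : Subtype.val '' ((fun a : ↥Mᶜ => f a) ⁻¹' {b}) = f ⁻¹' {b} \ {m} := by
    ext a
    constructor
    · rintro ⟨⟨a, haM⟩, hab, rfl⟩
      exact ⟨hab, fun ham => haM ((show a = m from ham) ▸ hmM)⟩
    · rintro ⟨hab, ham⟩
      exact ⟨⟨a, fun haM => ham (hM.injOn haM hmM (hab.trans hmb.symm))⟩, hab, rfl⟩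
  rw [← Set.ncard_image_of_injective _ Subtype.val_injective, fiber_eq,
    Set.ncard_sdiff_singleton_of_mem (show m ∈ f ⁻¹' {b} from hmb), hf b, Nat.add_sub_cancel]

open Classical in
/-- The coloring that gives the edges in `M` a new last color and extends the coloring `c` of the
remaining edges. -/
noncomputable def extendByLast (M : Set α) (c : ↥Mᶜ → Fin k) (a : α) : Fin (k + 1) :=
  if h : a ∈ M then Fin.last k else (c ⟨a, h⟩).castSucc

theorem isFiberLabeling_extendByLast {f : α → β} {M : Set α} (hM : Set.BijOn f M Set.univ)
    {c : ↥Mᶜ → Fin k} (hc : IsFiberLabeling (fun a : ↥Mᶜ => f a) c) :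
    IsFiberLabeling f (extendByLast M c) := by
  have eq_last {a : α} (ha : a ∈ M) : extendByLast M c a = Fin.last k := dif_pos ha
  have eq_castSucc {a : α} (ha : a ∉ M) :
      extendByLast M c a = (c ⟨a, ha⟩).castSucc := dif_neg ha
  constructor
  · intro a a' h
    obtain ⟨hf, hlabel⟩ := Prod.ext_iff.1 h
    by_cases ha : a ∈ M <;> by_cases ha' : a' ∈ M <;>
      simp only [ha, ha', eq_last, eq_castSucc, not_false_eq_true] at hlabel
    · exact hM.injOn ha ha' hf
    · exact absurd hlabel.symm (Fin.castSucc_ne_last _)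
    · exact absurd hlabel (Fin.castSucc_ne_last _)
    · exact congrArg Subtype.val (@hc.1 ⟨a, ha⟩ ⟨a', ha'⟩
        (Prod.ext hf (Fin.castSucc_injective _ hlabel)))
  · rintro ⟨b, i⟩
    induction i using Fin.lastCases with
    | last =>
      obtain ⟨a, ha, rfl⟩ := hM.surjOn (Set.mem_univ b)
      exact ⟨a, Prod.ext rfl (eq_last ha)⟩
    | cast i =>
      obtain ⟨⟨a, ha⟩, h⟩ := hc.2 (b, i)
      obtain ⟨rfl, rfl⟩ := Prod.ext_iff.1 h
      exact ⟨a, Prod.ext rfl (eq_castSucc ha)⟩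

section CommonLabeling

variable [Finite β] [Finite γ] {f : α → β} {g : α → γ}

theorem IsKToOne.exists_bijective_forall_exists_eq [Finite α] (hk : k ≠ 0) (hf : IsKToOne k f)
    (hg : IsKToOne k g) :
    ∃ φ : β → γ, Function.Bijective φ ∧ ∀ b, ∃ a, f a = b ∧ g a = φ b := by
  classical
  have := Fintype.ofFinite α
  have := Fintype.ofFinite γ
  obtain ⟨φ, φ_inj, hφ⟩ := (Fintype.all_card_le_filter_rel_iff_exists_injective
    fun b c => ∃ a, f a = b ∧ g a = c).1 fun s => by
      let neighbors : Finset γ := {c | ∃ b ∈ s, ∃ a, f a = b ∧ g a = c}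
      have card_edges_le : #{a | f a ∈ s} ≤ #{a | g a ∈ neighbors} := by
        refine card_le_card fun a ha => ?_
        simp only [neighbors, mem_filter, mem_univ, true_and] at ha ⊢
        exact ⟨f a, ha, a, rfl, rfl⟩
      rw [hf.card_filter_mem, hg.card_filter_mem] at card_edges_le
      exact Nat.le_of_mul_le_mul_left card_edges_le (Nat.pos_of_ne_zero hk)
  have card_eq : Nat.card β = Nat.card γ :=
    Nat.eq_of_mul_eq_mul_left (Nat.pos_of_ne_zero hk) (hf.card_eq_mul.symm.trans hg.card_eq_mul)
  exact ⟨φ, (Nat.bijective_iff_injective_and_card φ).2 ⟨φ_inj, card_eq⟩, hφ⟩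

theorem IsKToOne.exists_perfect_matching [Finite α] (hk : k ≠ 0) (hf : IsKToOne k f)
    (hg : IsKToOne k g) :
    ∃ M : Set α, Set.BijOn f M Set.univ ∧ Set.BijOn g M Set.univ := by
  obtain ⟨φ, φ_bij, hφ⟩ := hf.exists_bijective_forall_exists_eq hk hg
  choose edge f_edge g_edge using hφ
  have f_comp_edge : f ∘ edge = id := funext f_edge
  have g_comp_edge : g ∘ edge = φ := funext g_edge
  exact ⟨Set.range edge, bijOn_range_univ_of_bijective_comp (f_comp_edge ▸ Function.bijective_id),
    bijOn_range_univ_of_bijective_comp (g_comp_edge ▸ φ_bij)⟩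

theorem IsKToOne.exists_common_labeling [Finite α] (hf : IsKToOne k f) (hg : IsKToOne k g) :
    ∃ c : α → Fin k, IsFiberLabeling f c ∧ IsFiberLabeling g c := by
  induction k generalizing α with
  | zero =>
    have : IsEmpty α := Finite.card_eq_zero_iff.1 (by rw [hf.card_eq_mul, zero_mul])
    exact ⟨isEmptyElim, ⟨Function.injective_of_subsingleton _, fun p => p.2.elim0⟩,
      Function.injective_of_subsingleton _, fun p => p.2.elim0⟩
  | succ k ih =>
    obtain ⟨M, hfM, hgM⟩ := hf.exists_perfect_matching k.succ_ne_zero hg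
    obtain ⟨c, hfc, hgc⟩ := ih (hf.restrict_compl hfM) (hg.restrict_compl hgM)
    exact ⟨extendByLast M c, isFiberLabeling_extendByLast hfM hfc,
      isFiberLabeling_extendByLast hgM hgc⟩

end CommonLabeling

section Layers

variable {a : α → β} {b : α → γ}

theorem IsKToOne.exists_isFiberLabeling_prod [Finite α] [Finite β] [Finite γ]
    (ha : IsKToOne r a) (hb : IsKToOne (m * r) b) :
    ∃ (i : α → Fin r) (q : α → Fin m),
      IsFiberLabeling a i ∧ IsFiberLabeling b fun e => (i e, q e) := by
  obtain ⟨c, hc, -⟩ := hb.exists_common_labeling hb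
  let q : α → Fin m := fun e => (c e).divNat
  have split_labeling : IsFiberLabeling (fun e => (b e, q e)) fun e => (c e).modNat :=
    (((Equiv.refl γ).prodCongr finProdFinEquiv.symm).trans
      (Equiv.prodAssoc _ _ _).symm).bijective.comp hc
  obtain ⟨i, hai, hbi⟩ :=
    ha.exists_common_labeling (by simpa using split_labeling.isKToOne)
  exact ⟨i, q, hai, ((Equiv.prodAssoc _ _ _).trans
    ((Equiv.refl γ).prodCongr (Equiv.prodComm _ _))).bijective.comp hbi⟩

theorem isFiberLabeling_prod_iff {E : β × κ ≃ α} {b : α → γ} {q : α → ι} :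
    IsFiberLabeling b (fun e => ((E.symm e).2, q e)) ↔
      ∀ j, IsFiberLabeling (fun x => b (E (x, j))) fun x => q (E (x, j)) := by
  have comp_eq : (fun e => (b e, (E.symm e).2, q e)) ∘ E = fun p => (b (E p), p.2, q (E p)) := by
    simp only [Function.comp_def, Equiv.symm_apply_apply]
  rw [IsFiberLabeling, ← Function.Bijective.of_comp_iff _ E.bijective, comp_eq]
  constructor
  · refine fun h j => ⟨fun x x' hxx' => ?_, fun ⟨c, l⟩ => ?_⟩
    · obtain ⟨hb, hq⟩ := Prod.ext_iff.1 hxx'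
      exact congrArg Prod.fst (@h.1 (x, j) (x', j) (Prod.ext hb (Prod.ext rfl hq)))
    · obtain ⟨⟨x, j⟩, hx⟩ := h.2 (c, j, l)
      obtain ⟨rfl, rfl, rfl⟩ := by simpa only [Prod.mk.injEq] using hx
      exact ⟨x, rfl⟩
  · refine fun h => ⟨fun ⟨x, j⟩ ⟨x', j'⟩ hxx' => ?_, fun ⟨c, j, l⟩ => ?_⟩
    · obtain ⟨hb, rfl, hq⟩ := by simpa only [Prod.mk.injEq] using hxx'
      exact Prod.ext ((h j).1 (Prod.ext hb hq)) rfl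
    · obtain ⟨x, hx⟩ := (h j).2 (c, l)
      obtain ⟨rfl, rfl⟩ := Prod.ext_iff.1 hx
      exact ⟨(x, j), rfl⟩

theorem exists_isFiberLabeling_half [Finite β] [Finite γ] {f : Fin r → β → γ}
    (hf : ∀ i, IsKToOne m (f i)) :
    ∃ s : Fin ((r + 1) / 2) → β → Fin m,
      ∀ i : Fin r, IsFiberLabeling (f i) (s ⟨i / 2, by lia⟩) := by
  have label_pair (j : Fin ((r + 1) / 2)) :
      ∃ s : β → Fin m, ∀ i : Fin r, i.val / 2 = j → IsFiberLabeling (f i) s := by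
    -- For odd `r` the last map is paired with itself.
    obtain ⟨s, hs_even, hs_odd⟩ := (hf ⟨2 * j, by lia⟩).exists_common_labeling
      (hf ⟨min (2 * j + 1) (r - 1), by lia⟩)
    refine ⟨s, fun i hi => ?_⟩
    obtain hi_even | hi_odd := Nat.mod_two_eq_zero_or_one i
    · rwa [show i = ⟨2 * j, by lia⟩ from Fin.ext (by simp only; lia)]
    · rwa [show i = ⟨min (2 * j + 1) (r - 1), by lia⟩ from Fin.ext (by simp only; lia)]
  choose s hs using label_pair
  exact ⟨s, fun i => hs _ i rfl⟩

/-- The color of the layer-`j` edge at a vertex whose labels are `t`: layers `2l` and `2l + 1` share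
the label `t l`, so that `⌈r / 2⌉` labels determine the palette of the vertex. -/
def pairedColor (t : Fin ((r + 1) / 2) → Fin m) (j : Fin r) : Fin r × Fin m :=
  (j, t ⟨j / 2, by lia⟩)

theorem IsKToOne.exists_isFiberLabeling_pairedColor [Finite α] [Finite β] [Finite γ]
    (ha : IsKToOne r a) (hb : IsKToOne (m * r) b) :
    ∃ (i : α → Fin r) (s : β → Fin ((r + 1) / 2) → Fin m),
      IsFiberLabeling a i ∧ IsFiberLabeling b fun e => pairedColor (s (a e)) (i e) := by
  obtain ⟨i, q, hai, hbq⟩ := ha.exists_isFiberLabeling_prod hb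
  let E : β × Fin r ≃ α := (Equiv.ofBijective _ hai).symm
  have layer_isKToOne (j : Fin r) : IsKToOne m fun x => b (E (x, j)) := by
    simpa only [Nat.card_fin] using (isFiberLabeling_prod_iff (E := E).1 hbq j).isKToOne
  obtain ⟨s, hs⟩ := exists_isFiberLabeling_half layer_isKToOne
  have endpoint_E (x : β) (j : Fin r) : a (E (x, j)) = x :=
    congrArg Prod.fst (E.symm_apply_apply (x, j))
  have layer_E (x : β) (j : Fin r) : i (E (x, j)) = j :=
    congrArg Prod.snd (E.symm_apply_apply (x, j))
  refine ⟨i, fun x j => s j x, hai, isFiberLabeling_prod_iff (E := E).2 fun j => ?_⟩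
  simpa only [endpoint_E, layer_E] using hs j

theorem IsFiberLabeling.injOn_pairedColor {i : α → Fin r} (hi : IsFiberLabeling a i)
    (s : β → Fin ((r + 1) / 2) → Fin m) (x : β) :
    Set.InjOn (fun e => pairedColor (s (a e)) (i e)) (a ⁻¹' {x}) :=
  fun _ he _ he' h => (hi.bijOn x).injOn he he' (congrArg Prod.fst h)

theorem IsFiberLabeling.image_pairedColor {i : α → Fin r} (hi : IsFiberLabeling a i)
    (s : β → Fin ((r + 1) / 2) → Fin m) (x : β) :
    (fun e => pairedColor (s (a e)) (i e)) '' (a ⁻¹' {x}) = Set.range (pairedColor (s x)) := by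
  rw [← Set.image_univ, ← (hi.bijOn x).image_eq, Set.image_image]
  exact Set.image_congr fun e he => by rw [Set.mem_singleton_iff.1 he]

end Layers

end FiberLabeling

section Palettes

variable {V : Type*} {G : SimpleGraph V}

theorem ncard_incidenceSet [Fintype V] [DecidableRel G.Adj] (v : V) :
    (G.incidenceSet v).ncard = G.degree v := by
  classical
  rw [← Nat.card_coe_set_eq, Nat.card_eq_fintype_card, card_incidenceSet_eq_degree]

theorem palette_eq_image_incidenceSet (c : Sym2 V → ℕ) (v : V) :
    palette G c v = c '' G.incidenceSet v := by
  ext n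
  simp only [palette, incidenceSet, Set.mem_ofPred_eq, Set.mem_image, and_assoc]

theorem IsProperEdgeColoring.ncard_palette [Fintype V] [DecidableRel G.Adj] {c : Sym2 V → ℕ}
    (hc : IsProperEdgeColoring G c) (v : V) : (palette G c v).ncard = G.degree v := by
  have injOn_incidenceSet : Set.InjOn c (G.incidenceSet v) := fun e he e' he' h =>
    by_contra fun hne => hc e he.1 e' he'.1 hne ⟨v, he.2, he'.2⟩ h
  rw [palette_eq_image_incidenceSet, injOn_incidenceSet.ncard_image, ncard_incidenceSet]

theorem le_paletteIndex [Countable V] {n : ℕ}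
    (h : ∀ c, IsProperEdgeColoring G c → n ≤ (Set.range (palette G c)).ncard) :
    n ≤ paletteIndex G := by
  have : Countable (Sym2 V) := Quotient.countable
  obtain ⟨c, c_inj⟩ := exists_injective_nat (Sym2 V)
  have c_proper : IsProperEdgeColoring G c := fun _ _ _ _ hne _ h => hne (c_inj h)
  refine le_csInf ⟨_, c, c_proper, rfl⟩ ?_
  rintro _ ⟨c', hc', rfl⟩
  exact h c' hc'

theorem paletteIndex_le_of_edgeColoring {κ : Type*} [Countable κ] (c : G.edgeSet → κ)
    (hc : ∀ v, Set.InjOn c {e | v ∈ e.1}) :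
    paletteIndex G ≤ (Set.range fun v => c '' {e | v ∈ e.1}).ncard := by
  obtain ⟨encode, encode_inj⟩ := exists_injective_nat κ
  let c' : Sym2 V → ℕ := Function.extend Subtype.val (encode ∘ c) 0
  have c'_apply (e : G.edgeSet) : c' e = encode (c e) :=
    Subtype.val_injective.extend_apply _ _ e
  have c'_proper : IsProperEdgeColoring G c' := by
    rintro e₁ he₁ e₂ he₂ hne ⟨v, hv₁, hv₂⟩ h
    rw [c'_apply ⟨e₁, he₁⟩, c'_apply ⟨e₂, he₂⟩] at h
    exact hne (congrArg Subtype.val (hc v hv₁ hv₂ (encode_inj h)))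
  have palette_c' : palette G c' = Set.image encode ∘ fun v => c '' {e | v ∈ e.1} := by
    ext v n
    simp [palette, ← c'_apply, and_left_comm]
  refine Nat.sInf_le ⟨c', c'_proper, ?_⟩
  rw [palette_c', Set.range_comp, Set.ncard_image_of_injective _ encode_inj.image_injective]

end Palettes

section Bipartite

variable {V : Type*} {G : SimpleGraph V} {s t : Set V}

/-- `a` sends each edge to its endpoint in the part `s`, which is also its only endpoint there. -/
def IsEndpointMap (a : G.edgeSet → s) : Prop :=
  ∀ v, a ⁻¹' {v} = {e | v.1 ∈ e.1}

theorem exists_isEndpointMap (h : G.IsBipartiteWith s t) :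
    ∃ a : G.edgeSet → s, IsEndpointMap a := by
  have mem_iff {x y : V} (hx : x ∈ s) (hy : y ∈ t) (v : s) : ⟨x, hx⟩ = v ↔ v.1 ∈ s(x, y) := by
    have hvy : v.1 ≠ y := fun hvy => h.disjoint.notMem_of_mem_left v.2 (hvy ▸ hy)
    rw [Sym2.mem_iff, or_iff_left hvy, Subtype.ext_iff, eq_comm]
  have exists_endpoint : ∀ e : G.edgeSet, ∃ x : s, ∀ v : s, x = v ↔ v.1 ∈ e.1 := by
    rintro ⟨⟨x, y⟩, hxy⟩
    obtain ⟨hx, hy⟩ | ⟨hx, hy⟩ := h.mem_of_adj hxy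
    · exact ⟨⟨x, hx⟩, mem_iff hx hy⟩
    · exact ⟨⟨y, hy⟩, fun v => (mem_iff hy hx v).trans (by rw [Sym2.eq_swap])⟩
  choose a ha using exists_endpoint
  exact ⟨a, fun v => Set.ext fun e => ha e v⟩

theorem IsEndpointMap.isKToOne [Fintype V] [DecidableRel G.Adj] {d : ℕ} {a : G.edgeSet → s}
    (ha : IsEndpointMap a) (hd : ∀ v ∈ s, G.degree v = d) : IsKToOne d a := by
  intro v
  have image_fiber : Subtype.val '' (a ⁻¹' {v}) = G.incidenceSet v := by
    ext e
    simp [ha v, incidenceSet, and_comm]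
  rw [← Set.ncard_image_of_injective _ Subtype.val_injective, image_fiber,
    ncard_incidenceSet, hd v v.2]

theorem paletteIndex_le_card_add_one {ι κ : Type*} [Finite ι] [Countable κ]
    (hst : ∀ v, v ∈ s ∨ v ∈ t) {a : G.edgeSet → s} {b : G.edgeSet → t} (ha : IsEndpointMap a)
    (hb : IsEndpointMap b) {c : G.edgeSet → κ} {F : ι → Set κ}
    (hc_inj : ∀ x, Set.InjOn c (a ⁻¹' {x})) (hcF : ∀ x, c '' (a ⁻¹' {x}) ∈ Set.range F)
    (hc : IsFiberLabeling b c) : paletteIndex G ≤ Nat.card ι + 1 := by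
  have injOn_incident (v : V) : Set.InjOn c {e | v ∈ e.1} := by
    obtain hv | hv := hst v
    · exact ha ⟨v, hv⟩ ▸ hc_inj ⟨v, hv⟩
    · exact hb ⟨v, hv⟩ ▸ (hc.bijOn ⟨v, hv⟩).injOn
  have image_mem (v : V) : c '' {e | v ∈ e.1} ∈ insert Set.univ (Set.range F) := by
    obtain hv | hv := hst v
    · exact Or.inr (ha ⟨v, hv⟩ ▸ hcF ⟨v, hv⟩)
    · exact Or.inl (hb ⟨v, hv⟩ ▸ (hc.bijOn ⟨v, hv⟩).image_eq)
  calc paletteIndex G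
      ≤ (Set.range fun v => c '' {e | v ∈ e.1}).ncard :=
        paletteIndex_le_of_edgeColoring c injOn_incident
    _ ≤ (insert Set.univ (Set.range F)).ncard :=
        Set.ncard_le_ncard (Set.range_subset_iff.2 image_mem) (Set.toFinite _)
    _ ≤ (Set.range F).ncard + 1 := Set.ncard_insert_le _ _
    _ ≤ Nat.card ι + 1 := by
        gcongr
        rw [← Nat.card_coe_set_eq]
        exact Finite.card_range_le F

end Bipartite

namespace IsBiregular

variable {V : Type*} [Fintype V] {G : SimpleGraph V} [DecidableRel G.Adj]

theorem three_le_paletteIndex {p q : ℕ} (hpq : p < q) (hG : IsBiregular G p q) :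
    3 ≤ paletteIndex G := by
  refine le_paletteIndex fun c hc => ?_
  obtain ⟨X, Y, ⟨x, hx⟩, ⟨y, hy⟩, hdisj, -, hadj, hdX, hdY⟩ := hG
  have palette_X_ne_Y {v w : V} (hv : v ∈ X) (hw : w ∈ Y) : palette G c v ≠ palette G c w := by
    refine fun h => hpq.ne ?_
    rw [← hdX v hv, ← hdY w hw, ← hc.ncard_palette, ← hc.ncard_palette, h]
  have palette_x_finite : (palette G c x).Finite := by
    rw [palette_eq_image_incidenceSet]
    exact (Set.toFinite _).image c
  obtain ⟨n, hny, hnx⟩ : ∃ n ∈ palette G c y, n ∉ palette G c x :=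
    Set.exists_mem_notMem_of_ncard_lt_ncard
      (by rwa [hc.ncard_palette, hc.ncard_palette, hdX x hx, hdY y hy]) palette_x_finite
  obtain ⟨e, he, hye, hen⟩ := hny
  obtain ⟨w, rfl⟩ := Sym2.mem_iff_exists.1 hye
  have hw : w ∈ X := (hadj y w he).elim
    (fun h => absurd hy (Finset.disjoint_left.1 hdisj h.1)) And.right
  have hnw : n ∈ palette G c w := ⟨s(y, w), he, Sym2.mem_mk_right y w, hen⟩
  have palette_x_ne_w : palette G c x ≠ palette G c w := fun h => hnx (h ▸ hnw)
  have three_palettes :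
      ({palette G c x, palette G c w, palette G c y} : Set (Set ℕ)).ncard = 3 :=
    Set.ncard_eq_three.2 ⟨_, _, _, palette_x_ne_w, palette_X_ne_Y hx hy,
      palette_X_ne_Y hw hy, rfl⟩
  rw [← three_palettes]
  refine Set.ncard_le_ncard ?_ (Set.finite_range _)
  rintro _ (rfl | rfl | rfl) <;> exact Set.mem_range_self _

theorem paletteIndex_le {m r : ℕ} (hG : IsBiregular G r (m * r)) :
    paletteIndex G ≤ m ^ ((r + 1) / 2) + 1 := by
  obtain ⟨X, Y, -, -, hdisj, hcover, hadj, hdX, hdY⟩ := hG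
  have bip : G.IsBipartiteWith X Y := ⟨disjoint_coe.2 hdisj, fun v w => hadj v w⟩
  obtain ⟨a, ha⟩ := exists_isEndpointMap bip
  obtain ⟨b, hb⟩ := exists_isEndpointMap bip.symm
  obtain ⟨i, s, hai, hbs⟩ :=
    (ha.isKToOne hdX).exists_isFiberLabeling_pairedColor (hb.isKToOne hdY)
  simpa using paletteIndex_le_card_add_one hcover ha hb (F := fun t => Set.range (pairedColor t))
    (hai.injOn_pairedColor s) (fun x => ⟨s x, (hai.image_pairedColor s x).symm⟩) hbs

end IsBiregular

theorem palette_index_r_twoR_biregular_general {V : Type*} [Fintype V] (G : SimpleGraph V)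
    [DecidableRel G.Adj] (m r : ℕ) (hm : 1 < m) (hr : 0 < r) (hG : IsBiregular G r (m * r)) :
    3 ≤ paletteIndex G ∧ paletteIndex G ≤ m ^ ((r + 1) / 2) + 1 :=
  ⟨hG.three_le_paletteIndex (lt_mul_of_one_lt_left hr hm), hG.paletteIndex_le⟩

/-- If `G` is `(r,2r)`-biregular (`r ≥ 2`), then `3 ≤ š(G) ≤ 2^⌈r/2⌉ + 1`. -/
theorem palette_index_r_twoR_biregular {V : Type*} [Fintype V]
    (G : SimpleGraph V) [DecidableRel G.Adj] (r : ℕ) (hr : 2 ≤ r)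
    (hG : IsBiregular G r (2 * r)) :
    3 ≤ paletteIndex G ∧ paletteIndex G ≤ 2 ^ ((r + 1) / 2) + 1 :=
  palette_index_r_twoR_biregular_general G 2 r one_lt_two (by lia) hG
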